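/- Let X be a complemented subspace of X_p which is isomorphic to a complemented subspace of ℓ_p ⊕ ℓ_2. Then there exist a bounded projection P on X with range Y and positive constants ε, α, α' with ε ≤ ‖I − P‖^{-1} such that (a) r(y) ≤ α' for all nonzero y ∈ Y, and (b) for every x ∈ X with r(x) < α there exists y ∈ Y with ‖x − y‖ < ε·‖x‖. -/

import Mathlib

open scoped ENNReal

noncomputable section

/-- The sequence space `ℓ_p` (of real sequences), for a real exponent `p`. -/
abbrev SeqP (p : ℝ) := lp (fun _ : ℕ => ℝ) (ENNReal.ofReal p)

/-- The sequence space `ℓ_2` (of real sequences). -/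
abbrev Seq2 := lp (fun _ : ℕ => ℝ) 2

/-- The space `X_{p,w}`, realized as the submodule of `ℓ_p ⊕_∞ ℓ_2` consisting of the
pairs `(x, y)` with `y n = w n * x n`.  Since the norm on the product is the maximum of
the two norms, this is exactly the completion of the finitely supported sequences under
`‖a‖ = max {|a|_p, |a|_{2,w}}`, the element with coordinates `a` being identified with
the pair `(a, w·a)`. -/
def XpwMod (p : ℝ) (w : ℕ → ℝ) : Submodule ℝ (SeqP p × Seq2) where
  carrier := {z | ∀ n, (z.2 : ℕ → ℝ) n = w n * (z.1 : ℕ → ℝ) n}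
  add_mem' := by
    intro a b ha hb n
    simp only [Prod.fst_add, Prod.snd_add, lp.coeFn_add, Pi.add_apply, ha n, hb n]
    ring
  zero_mem' := by
    intro n
    simp
  smul_mem' := by
    intro c a ha n
    simp only [Prod.smul_fst, Prod.smul_snd, lp.coeFn_smul, Pi.smul_apply, ha n,
      smul_eq_mul]
    ring

/-- The space `X_{p,w}` with its natural norm `‖a‖ = max {|a|_p, |a|_{2,w}}`. -/
def Xpw (p : ℝ) (w : ℕ → ℝ) : Type := ↥(XpwMod p w)

variable {p : ℝ} {w : ℕ → ℝ}

instance [Fact (1 ≤ ENNReal.ofReal p)] : NormedAddCommGroup (Xpw p w) :=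
  inferInstanceAs (NormedAddCommGroup ↥(XpwMod p w))

instance [Fact (1 ≤ ENNReal.ofReal p)] : NormedSpace ℝ (Xpw p w) :=
  inferInstanceAs (NormedSpace ℝ ↥(XpwMod p w))

/-- The pair of coordinates (in `ℓ_p` and in weighted `ℓ_2`) of an element of `X_{p,w}`. -/
def Xpw.pair (x : Xpw p w) : SeqP p × Seq2 := (show ↥(XpwMod p w) from x).val

/-- The underlying sequence of coordinates of an element of `X_{p,w}`. -/
def seq (x : Xpw p w) : ℕ → ℝ := (Xpw.pair x).1

/-- `|x|_p` for `x ∈ X_{p,w}`. -/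
def nrmP (x : Xpw p w) : ℝ := ‖(Xpw.pair x).1‖

/-- `|x|_2 = |x|_{2,w}` for `x ∈ X_{p,w}`. -/
def nrm2 (x : Xpw p w) : ℝ := ‖(Xpw.pair x).2‖

/-- The ratio `r(x) = |x|_2 / |x|_p`. -/
def ratio (x : Xpw p w) : ℝ := nrm2 x / nrmP x

/-- `ω(E) = ∑_{n ∈ E} w_n^{2p/(p-2)}`. -/
def omegaE (p : ℝ) (w : ℕ → ℝ) (E : Set ℕ) : ℝ :=
  ∑' n : E, w (n : ℕ) ^ (2 * p / (p - 2))

/-- The pairing `⟨x, y⟩ = ∑_n x_n y_n w_n²`. -/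
def pairW (w : ℕ → ℝ) (x y : Xpw p w) : ℝ :=
  ∑' n, seq x n * seq y n * w n ^ 2

/-- `w` is a weight sequence suitable for Rosenthal's space `X_p`: it is positive and for
every `ε > 0`, `∑_{w_n < ε} w_n^{2p/(p-2)} = ∞`. -/
def IsXpWeight (p : ℝ) (w : ℕ → ℝ) : Prop :=
  (∀ n, 0 < w n) ∧
    ∀ ε : ℝ, 0 < ε →
      (∑' n : {n : ℕ | w n < ε}, ENNReal.ofReal (w (n : ℕ) ^ (2 * p / (p - 2)))) = ⊤

theorem memℓp_indicator {q : ℝ≥0∞} (E : Set ℕ) {f : ℕ → ℝ} (hf : Memℓp f q) :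
    Memℓp (E.indicator f) q := by
  rcases ENNReal.trichotomy q with hq | hq | hq
  · subst hq
    refine memℓp_zero ((memℓp_zero_iff.mp hf).subset ?_)
    intro i hi
    simp only [Set.mem_setOf_eq] at hi ⊢
    intro h
    exact hi (by simp [Set.indicator_apply, h])
  · subst hq
    obtain ⟨C, hC⟩ := (memℓp_infty_iff.mp hf)
    refine memℓp_infty ⟨C, ?_⟩
    rintro x ⟨i, rfl⟩
    exact le_trans (norm_indicator_le_norm_self f i) (hC ⟨i, rfl⟩)
  · refine memℓp_gen (Summable.of_nonneg_of_le (fun i => ?_) (fun i => ?_)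
      (hf.summable hq))
    · positivity
    · exact Real.rpow_le_rpow (norm_nonneg _) (norm_indicator_le_norm_self f i) hq.le

/-- The restriction `x ↦ x_{|E}` of elements of `X_{p,w}` to a set `E` of coordinates. -/
def restrict (E : Set ℕ) (x : Xpw p w) : Xpw p w :=
  show ↥(XpwMod p w) from
  ⟨(⟨E.indicator ((Xpw.pair x).1 : ℕ → ℝ), memℓp_indicator E (lp.memℓp (Xpw.pair x).1)⟩,
    ⟨E.indicator ((Xpw.pair x).2 : ℕ → ℝ), memℓp_indicator E (lp.memℓp (Xpw.pair x).2)⟩), by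
    intro n
    by_cases hn : n ∈ E
    · have h : ((Xpw.pair x).2 : ℕ → ℝ) n = w n * ((Xpw.pair x).1 : ℕ → ℝ) n :=
        (show ↥(XpwMod p w) from x).2 n
      simpa [Set.indicator_of_mem hn] using h
    · simp [Set.indicator_of_notMem hn]⟩

/-!
The isomorphism splits the identity of `X` as `A + B`, where `A` factors through `ℓ_p` and `B`
through `ℓ_2`. By Pitt's theorem operators from `ℓ_p` to `ℓ_2` are compact, hence so is
`A - A ^ 2 = B * A`. Thus `A` is an idempotent modulo the compact operators and lifts to an
idempotent `P` with `P - A` compact: some compact perturbation of `2 * A - 1`, divided by a square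
root of its square, is an involution.

Let `j x = w · x`, so that `|x|_2 = ‖j x‖`. Since `j ∘ P` is a compact operator, the `ℓ_p` norm is
equivalent to the norm of `X` on the range of `P`, which is (a). For (b), unit vectors `x` with
`j x` small are almost disjoint in `ℓ_p` from any given vector, so they satisfy an upper
`p`-estimate; as `p > 2`, Hilbert space valued operators and compact operators are small on them,
and `1 - P = B - (P - A)`.
-/

section UpperEstimate

open Filter Topology

variable {ι E H : Type*}
variable [NormedAddCommGroup E] [NormedSpace ℝ E] [NormedAddCommGroup H] [InnerProductSpace ℝ H]

/-- The family `x` satisfies `limsup ‖u + x n‖ ^ q ≤ ‖u‖ ^ q + C` along `l` for every vector `u`.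
In `ℓ^q` this holds for bounded families tending to zero coordinatewise. -/
def HasUpperEstimate (q C : ℝ) (l : Filter ι) (x : ι → E) : Prop :=
  ∀ (u : E) (R : ℝ), ‖u‖ ^ q + C < R → ∀ᶠ n in l, ‖u + x n‖ ^ q < R

lemma exists_nat_mul_rpow_lt {θ : ℝ} (hθ : θ < 1) (D : ℝ) : ∃ N : ℕ, D * (N : ℝ) ^ θ < N := by
  have hlim : Tendsto (fun N : ℕ ↦ (N : ℝ) ^ (1 - θ)) atTop atTop :=
    (tendsto_rpow_atTop (sub_pos.2 hθ)).comp tendsto_natCast_atTop_atTop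
  obtain ⟨N, hN, hN0⟩ := ((hlim.eventually_gt_atTop D).and (eventually_gt_atTop 0)).exists
  have hN0' : (0 : ℝ) < N := Nat.cast_pos.2 hN0
  refine ⟨N, ?_⟩
  calc D * (N : ℝ) ^ θ < (N : ℝ) ^ (1 - θ) * (N : ℝ) ^ θ := by gcongr
    _ = N := by rw [← Real.rpow_add hN0', sub_add_cancel, Real.rpow_one]

lemma exists_rpow_norm_le_and_le_sq_norm_map {q C δ : ℝ} {l : Filter ι} {x : ι → E}
    (hx : HasUpperEstimate q C l x) (hq : q ≠ 0) (hδ : 0 ≤ δ) (T : E →ₗ[ℝ] H)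
    (hT : ∃ᶠ n in l, δ ≤ ‖T (x n)‖) (N : ℕ) :
    ∃ u, ‖u‖ ^ q ≤ N * (C + 1) ∧ N * δ ^ 2 ≤ ‖T u‖ ^ 2 := by
  induction N with
  | zero => exact ⟨0, by simp [Real.zero_rpow hq], by simp⟩
  | succ N ih =>
    obtain ⟨u, hu, hTu⟩ := ih
    have hlt : ‖u‖ ^ q + C < ‖u‖ ^ q + (C + 1) := by linarith
    obtain ⟨n, hn, hadd, hsub⟩ :=
      (hT.and_eventually ((hx u _ hlt).and (hx (-u) _ (by rwa [norm_neg])))).exists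
    -- The average over the two signs gains at least `δ ^ 2`, so the better sign does.
    have hpar : ‖T (u + x n)‖ ^ 2 + ‖T (-u + x n)‖ ^ 2 = 2 * (‖T u‖ ^ 2 + ‖T (x n)‖ ^ 2) := by
      have := parallelogram_law_with_norm ℝ (T (x n)) (T u)
      rw [map_add, map_add, map_neg, neg_add_eq_sub, add_comm (T u)]
      linarith
    have hδn : δ ^ 2 ≤ ‖T (x n)‖ ^ 2 := pow_le_pow_left₀ hδ hn 2
    have hN : ((N + 1 : ℕ) : ℝ) * (C + 1) = N * (C + 1) + (C + 1) := by push_cast; ring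
    have hN' : ((N + 1 : ℕ) : ℝ) * δ ^ 2 = N * δ ^ 2 + δ ^ 2 := by push_cast; ring
    rcases le_total (‖T (-u + x n)‖ ^ 2) (‖T (u + x n)‖ ^ 2) with h | h
    · exact ⟨u + x n, by linarith, by linarith⟩
    · exact ⟨-u + x n, by linarith, by linarith⟩

lemma HasUpperEstimate.tendsto_map_zero {q C : ℝ} {l : Filter ι} {x : ι → E}
    (hx : HasUpperEstimate q C l x) (hC : 0 ≤ C) (hq : 2 < q) (T : E →L[ℝ] H) :
    Tendsto (fun n ↦ T (x n)) l (𝓝 0) := by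
  by_contra hT
  obtain ⟨δ, hδ, hfreq⟩ : ∃ δ > 0, ∃ᶠ n in l, δ ≤ ‖T (x n)‖ := by
    simpa [Metric.tendsto_nhds, Filter.not_eventually] using hT
  obtain ⟨N, hN⟩ := exists_nat_mul_rpow_lt (θ := 2 / q) ((div_lt_one (by linarith)).2 hq)
    (‖T‖ ^ 2 * (C + 1) ^ (2 / q) / δ ^ 2)
  obtain ⟨u, hu, hTu⟩ :=
    exists_rpow_norm_le_and_le_sq_norm_map hx (by linarith) hδ.le (T : E →ₗ[ℝ] H) hfreq N
  have hu2 : ‖u‖ ^ 2 ≤ N ^ (2 / q) * (C + 1) ^ (2 / q) := by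
    calc ‖u‖ ^ 2 = (‖u‖ ^ q) ^ (2 / q) := by
          rw [← Real.rpow_mul (norm_nonneg u), mul_div_cancel₀ _ (by linarith), Real.rpow_two]
      _ ≤ (N * (C + 1)) ^ (2 / q) := by gcongr
      _ = N ^ (2 / q) * (C + 1) ^ (2 / q) := Real.mul_rpow (by positivity) (by positivity)
  rw [div_mul_eq_mul_div, div_lt_iff₀ (by positivity)] at hN
  refine hN.not_ge (hTu.trans ?_)
  calc ‖T u‖ ^ 2 ≤ (‖T‖ * ‖u‖) ^ 2 := by gcongr; exact T.le_opNorm u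
    _ ≤ ‖T‖ ^ 2 * (N ^ (2 / q) * (C + 1) ^ (2 / q)) := by rw [mul_pow]; gcongr
    _ = ‖T‖ ^ 2 * (C + 1) ^ (2 / q) * N ^ (2 / q) := by ring

lemma HasUpperEstimate.of_norm_eq_max {F G : Type*} [NormedAddCommGroup F] [NormedSpace ℝ F]
    [NormedAddCommGroup G] [NormedSpace ℝ G] {q C : ℝ} {l : Filter ι} {x : ι → E}
    {i : E →L[ℝ] F} {j : E →L[ℝ] G} (hij : ∀ y, ‖y‖ = max ‖i y‖ ‖j y‖) (hC : 0 ≤ C) (hq : 0 ≤ q)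
    (hi : HasUpperEstimate q C l fun n ↦ i (x n)) (hj : Tendsto (fun n ↦ j (x n)) l (𝓝 0)) :
    HasUpperEstimate q C l x := by
  intro u R hR
  have hiu : ‖i u‖ ^ q ≤ ‖u‖ ^ q := by
    gcongr
    exact (le_max_left _ _).trans (hij u).ge
  have hju : ‖j u‖ ^ q ≤ ‖u‖ ^ q := by
    gcongr
    exact (le_max_right _ _).trans (hij u).ge
  have hjx : Tendsto (fun n ↦ ‖j u + j (x n)‖ ^ q) l (𝓝 (‖j u‖ ^ q)) := by
    simpa using ((hj.const_add (j u)).norm.rpow_const (.inr hq))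
  filter_upwards [hi (i u) R (by linarith), hjx.eventually_lt_const (show _ < R by linarith)]
    with n hni hnj
  rw [hij, map_add, map_add]
  rcases max_choice ‖i u + i (x n)‖ ‖j u + j (x n)‖ with h | h <;> rwa [h]

lemma HasUpperEstimate.tendsto_map_zero_of_isCompactOperator {F : Type*} [NormedAddCommGroup F]
    [NormedSpace ℝ F] {q C M : ℝ} {l : Filter ι} {x : ι → E} (hx : HasUpperEstimate q C l x)
    (hC : 0 ≤ C) (hq : 2 < q) (hM : ∀ᶠ n in l, ‖x n‖ ≤ M) {K : E →L[ℝ] F}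
    (hK : IsCompactOperator K) : Tendsto (fun n ↦ K (x n)) l (𝓝 0) := by
  obtain ⟨S, hS, hKS⟩ := hK.image_closedBall_subset_compact (𝕜₁ := ℝ) (f := (K : E →ₗ[ℝ] F)) M
  have hmem : ∀ᶠ n in l, K (x n) ∈ S :=
    hM.mono fun n hn ↦ hKS ⟨x n, mem_closedBall_zero_iff.2 hn, rfl⟩
  refine hS.tendsto_nhds_of_unique_mapClusterPt hmem fun z _ hz ↦ ?_
  refine SeparatingDual.eq_zero_of_forall_dual_eq_zero (R := ℝ) fun φ ↦ ?_
  have hφ : MapClusterPt (φ z) l fun n ↦ φ (K (x n)) :=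
    hz.continuousAt_comp φ.continuous.continuousAt
  exact eq_of_nhds_neBot (hφ.clusterPt.mono (hx.tendsto_map_zero hC hq (φ.comp K)))

variable {α : Type*} {F : α → Type*} [∀ a, NormedAddCommGroup (F a)] {q : ℝ≥0∞} [Fact (1 ≤ q)]

lemma norm_add_rpow_le_sum_add [DecidableEq α] (hq : 0 < q.toReal) (u x : lp F q) (s : Finset α) :
    ‖u + x‖ ^ q.toReal ≤ ∑ a ∈ s, ‖u a + x a‖ ^ q.toReal +
      (‖u - ∑ a ∈ s, lp.single q a (u a)‖ + ‖x‖) ^ q.toReal := by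
  have hsplit (f : lp F q) := lp.norm_compl_sum_single hq f s
  have htail : ‖x - ∑ a ∈ s, lp.single q a (x a)‖ ≤ ‖x‖ := by
    refine (Real.rpow_le_rpow_iff (norm_nonneg _) (norm_nonneg _) hq).1 ?_
    rw [hsplit]
    exact sub_le_self _ (Finset.sum_nonneg fun a _ ↦ Real.rpow_nonneg (norm_nonneg _) _)
  have hadd : u + x - ∑ a ∈ s, lp.single q a ((u + x) a) =
      (u - ∑ a ∈ s, lp.single q a (u a)) + (x - ∑ a ∈ s, lp.single q a (x a)) := by
    simp only [lp.coeFn_add, Pi.add_apply, lp.single_add, Finset.sum_add_distrib]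
    abel
  calc ‖u + x‖ ^ q.toReal
      = ∑ a ∈ s, ‖u a + x a‖ ^ q.toReal +
        ‖u + x - ∑ a ∈ s, lp.single q a ((u + x) a)‖ ^ q.toReal := by
        rw [hsplit, lp.coeFn_add]
        simp only [Pi.add_apply, add_sub_cancel]
    _ ≤ _ := by
        rw [hadd]
        gcongr
        exact (norm_add_le _ _).trans (by gcongr)

lemma hasUpperEstimate_lp (hq : q ≠ ⊤) {l : Filter ι} {x : ι → lp F q} {M : ℝ}
    (hM : ∀ᶠ n in l, ‖x n‖ ≤ M) (hx : ∀ a, Tendsto (fun n ↦ x n a) l (𝓝 0)) :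
    HasUpperEstimate q.toReal (M ^ q.toReal) l x := by
  classical
  have hq0 : 0 < q.toReal := ENNReal.toReal_pos (zero_lt_one.trans_le Fact.out).ne' hq
  intro u R hR
  have htail : Tendsto (fun s ↦ ‖u‖ ^ q.toReal +
      (‖u - ∑ a ∈ s, lp.single q a (u a)‖ + M) ^ q.toReal) atTop
      (𝓝 (‖u‖ ^ q.toReal + M ^ q.toReal)) := by
    have h : Tendsto (fun s ↦ ∑ a ∈ s, lp.single q a (u a)) atTop (𝓝 u) := lp.hasSum_single hq u
    simpa using (((h.const_sub u).norm.add_const M).rpow_const (.inr hq0.le)).const_add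
      (‖u‖ ^ q.toReal)
  obtain ⟨s, hs⟩ := (htail.eventually_lt_const hR).exists
  have hhead : Tendsto (fun n ↦ ∑ a ∈ s, ‖u a + x n a‖ ^ q.toReal) l
      (𝓝 (∑ a ∈ s, ‖u a‖ ^ q.toReal)) := by
    refine tendsto_finsetSum s fun a _ ↦ ?_
    simpa using ((hx a).const_add (u a)).norm.rpow_const (.inr hq0.le)
  have hsu := lp.sum_rpow_le_norm_rpow hq0 u s
  filter_upwards [hM, (hhead.add_const _).eventually_lt_const ((add_le_add_left hsu _).trans_lt hs)]
    with n hn hlt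
  refine ((norm_add_rpow_le_sum_add hq0 u (x n) s).trans ?_).trans_lt hlt
  gcongr

lemma exists_norm_le_forall_tendsto_apply [∀ a, ProperSpace (F a)] (l : Ultrafilter ι)
    {x : ι → lp F q} {M : ℝ} (hM : ∀ n, ‖x n‖ ≤ M) :
    ∃ b : lp F q, ‖b‖ ≤ M ∧ ∀ a, Tendsto (fun n ↦ x n a) l (𝓝 (b a)) := by
  have hq0 : q ≠ 0 := (zero_lt_one.trans_le Fact.out).ne'
  have hball : IsCompact (Set.univ.pi fun a ↦ Metric.closedBall (0 : F a) M) :=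
    isCompact_univ_pi fun a ↦ isCompact_closedBall _ _
  obtain ⟨b, -, hb⟩ := hball.ultrafilter_le_nhds (l.map fun n ↦ ⇑(x n)) <|
    le_principal_iff.2 <| Filter.mem_map.2 <| univ_mem' fun n a _ ↦
      mem_closedBall_zero_iff.2 ((lp.norm_apply_le_norm hq0 (x n) a).trans (hM n))
  have hmem : Memℓp b q :=
    lp.memℓp_of_tendsto (isBounded_iff_forall_norm_le.2 ⟨M, Set.forall_mem_range.2 hM⟩) hb
  exact ⟨⟨b, hmem⟩, lp.norm_le_of_tendsto (.of_forall hM) hb, tendsto_pi_nhds.1 hb⟩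

/-- **Pitt's theorem** for a Hilbert space target. -/
theorem isCompactOperator_of_two_lt [∀ a, NormedSpace ℝ (F a)] [∀ a, ProperSpace (F a)]
    (hq : q ≠ ⊤) (hq2 : 2 < q.toReal) (T : lp F q →L[ℝ] H) : IsCompactOperator T := by
  refine (isCompactOperator_iff_exists_mem_nhds_image_subset_compact _).2
    ⟨Metric.closedBall 0 1, Metric.closedBall_mem_nhds 0 one_pos, _, ?_, subset_rfl⟩
  rw [Set.image_eq_range, isCompact_iff_ultrafilter_le_nhds]
  intro f hf
  rw [← Set.image_univ, le_principal_iff] at hf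
  let l := Ultrafilter.ofComapInfPrincipal hf
  have hl : l.map _ = f := Ultrafilter.ofComapInfPrincipal_eq_of_map hf
  have hball (z : Metric.closedBall (0 : lp F q) 1) : ‖(z : lp F q)‖ ≤ 1 :=
    mem_closedBall_zero_iff.1 z.2
  obtain ⟨b, hb, hlim⟩ := exists_norm_le_forall_tendsto_apply l hball
  have hest : HasUpperEstimate q.toReal ((1 + ‖b‖) ^ q.toReal) l
      fun z : Metric.closedBall (0 : lp F q) 1 ↦ (z : lp F q) - b :=
    hasUpperEstimate_lp hq (.of_forall fun z ↦ (norm_sub_le _ _).trans (by gcongr; exact hball z))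
      fun a ↦ by simpa using (hlim a).sub_const (b a)
  have hT := (hest.tendsto_map_zero (by positivity) hq2 T).add_const (T b)
  simp only [map_sub, sub_add_cancel, zero_add] at hT
  exact ⟨T b, ⟨⟨b, mem_closedBall_zero_iff.2 hb⟩, rfl⟩, by rw [← hl]; exact hT⟩

end UpperEstimate

section SquareRoot

open NormedSpace MeasureTheory Set

variable {𝔸 : Type*} [NormedRing 𝔸] [NormedAlgebra ℝ 𝔸] [CompleteSpace 𝔸]

lemma commute_intervalIntegral_right {a : 𝔸} {f : ℝ → 𝔸} (hf : Continuous f)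
    (h : ∀ t, Commute a (f t)) (s t : ℝ) : Commute a (∫ u in s..t, f u) := by
  have hint := hf.intervalIntegrable (μ := volume) s t
  have hl := (ContinuousLinearMap.mul ℝ 𝔸 a).intervalIntegral_comp_comm hint
  have hr := ((ContinuousLinearMap.mul ℝ 𝔸).flip a).intervalIntegral_comp_comm hint
  have hfa (u : ℝ) : a * f u = f u * a := h u
  simp only [ContinuousLinearMap.mul_apply', ContinuousLinearMap.flip_apply, hfa] at hl hr
  exact hl.symm.trans hr

lemma hasDerivAt_exp_comp_of_commute {f : ℝ → 𝔸} {f' : 𝔸} {t : ℝ} (hf : HasDerivAt f f' t)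
    (hcomm : ∀ s, Commute (f t) (f s)) :
    HasDerivAt (fun s ↦ exp (f s)) (exp (f t) * f') t := by
  have hexp : HasFDerivAt exp (1 : 𝔸 →L[ℝ] 𝔸) (f t - f t) := by
    rw [sub_self]
    exact hasFDerivAt_exp_zero
  have hd := (hexp.comp_hasDerivAt t (hf.sub_const (f t))).const_mul (exp (f t))
  refine hd.congr_of_eventuallyEq (.of_forall fun s ↦ ?_)
  let _ : NormedAlgebra ℚ 𝔸 := .restrictScalars ℚ ℝ 𝔸
  have hcomm' : Commute (f t) (f s - f t) := (hcomm s).sub_right (Commute.refl _)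
  simp only [Function.comp_apply, ← exp_add_of_commute hcomm', add_sub_cancel]

lemma exists_exp_eq_one_add_mul (x : 𝔸) :
    ∃ y, (∀ a, Commute a x → Commute a y) ∧ exp x = 1 + x * y := by
  have hexp : Continuous fun t : ℝ ↦ exp (t • x) :=
    continuous_iff_continuousAt.2 fun t ↦ (hasDerivAt_exp_smul_const x t).continuousAt
  refine ⟨∫ t in (0 : ℝ)..1, exp (t • x), fun a ha ↦ ?_, ?_⟩
  · exact commute_intervalIntegral_right hexp (fun t ↦ (ha.smul_right t).exp_right) 0 1
  · have hint := (ContinuousLinearMap.mul ℝ 𝔸 x).intervalIntegral_comp_comm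
      (hexp.intervalIntegrable (μ := volume) 0 1)
    have hftc := intervalIntegral.integral_eq_sub_of_hasDerivAt
      (fun t _ ↦ hasDerivAt_exp_smul_const' (𝕂 := ℝ) x t)
      ((continuous_const.mul hexp).intervalIntegrable 0 1)
    simp only [ContinuousLinearMap.mul_apply'] at hint
    rw [← hint, hftc, one_smul, zero_smul, exp_zero, add_sub_cancel]

lemma exists_continuous_mul_one_sub_smul_eq_one {x : 𝔸}
    (hx : ∀ t ∈ Icc (0 : ℝ) 1, IsUnit (1 - t • x)) :
    ∃ r : ℝ → 𝔸, Continuous r ∧ (∀ a, Commute a x → ∀ t, Commute a (r t)) ∧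
      ∀ t ∈ Icc (0 : ℝ) 1, r t * (1 - t • x) = 1 := by
  let τ : ℝ → ℝ := fun t ↦ projIcc (0 : ℝ) 1 zero_le_one t
  have hunit (t : ℝ) : IsUnit (1 - τ t • x) := hx _ (projIcc 0 1 zero_le_one t).2
  refine ⟨fun t ↦ Ring.inverse (1 - τ t • x), ?_, fun a ha t ↦ ?_, fun t ht ↦ ?_⟩
  · refine continuous_iff_continuousAt.2 fun t ↦ ?_
    obtain ⟨u, hu⟩ := hunit t
    have hτ : Continuous fun t ↦ 1 - τ t • x :=
      continuous_const.sub ((continuous_subtype_val.comp continuous_projIcc).smul continuous_const)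
    exact ContinuousAt.comp (hu ▸ NormedRing.inverse_continuousAt u) hτ.continuousAt
  · obtain ⟨u, hu⟩ := hunit t
    have hau : Commute a u := hu ▸ (Commute.one_right a).sub_right (ha.smul_right _)
    simpa only [← hu, Ring.inverse_unit] using hau.units_inv_right
  · have hτ : τ t = t := congrArg Subtype.val (projIcc_of_mem zero_le_one ht)
    simp only [hτ]
    exact Ring.inverse_mul_cancel _ (hx t ht)

/-- `-x * y` is a logarithm of `1 - x`, with `y = ∫₀¹ (1 - t x)⁻¹ dt`. -/
lemma exists_exp_mul_mul_one_sub_eq_one {x : 𝔸} (hx : ∀ t ∈ Icc (0 : ℝ) 1, IsUnit (1 - t • x)) :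
    ∃ y, (∀ a, Commute a x → Commute a y) ∧ exp (x * y) * (1 - x) = 1 := by
  obtain ⟨r, hr, hcommr, hrx⟩ := exists_continuous_mul_one_sub_smul_eq_one hx
  have hcomm {a : 𝔸} (ha : Commute a x) (t : ℝ) : Commute a (∫ u in (0 : ℝ)..t, r u) :=
    commute_intervalIntegral_right hr (hcommr a ha) 0 t
  let L : ℝ → 𝔸 := fun t ↦ x * ∫ u in (0 : ℝ)..t, r u
  have hL (s t : ℝ) : Commute (L s) (L t) := by
    have hx (t : ℝ) : Commute x (∫ u in (0 : ℝ)..t, r u) := hcomm (Commute.refl x) t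
    exact ((Commute.refl x).mul_right (hx t)).mul_left
      ((hx s).symm.mul_right (hcomm (hx s).symm t))
  have hφ (t : ℝ) : HasDerivAt (fun t ↦ exp (L t) * (1 - t • x))
      (exp (L t) * (x * r t) * (1 - t • x) + exp (L t) * (-x)) t := by
    refine (hasDerivAt_exp_comp_of_commute (HasDerivAt.const_mul x ?_) (hL t)).mul ?_
    · exact (hr.integral_hasStrictDerivAt 0 t).hasDerivAt
    · simpa using ((hasDerivAt_id t).smul_const x).const_sub 1
  have hφ0 (t : ℝ) (ht : t ∈ Ico (0 : ℝ) 1) :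
      exp (L t) * (x * r t) * (1 - t • x) + exp (L t) * (-x) = 0 := by
    rw [mul_assoc, mul_assoc, hrx t (Ico_subset_Icc_self ht),
      ← mul_add, mul_one, add_neg_cancel, mul_zero]
  refine ⟨∫ u in (0 : ℝ)..1, r u, fun a ha ↦ hcomm ha 1, ?_⟩
  have hconst := constant_of_has_deriv_right_zero (f := fun t ↦ exp (L t) * (1 - t • x))
    (fun t _ ↦ (hφ t).continuousAt.continuousWithinAt)
    (fun t ht ↦ hφ0 t ht ▸ (hφ t).hasDerivWithinAt) 1 (right_mem_Icc.2 zero_le_one)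
  simpa [L] using hconst

lemma exists_one_add_mul_sq_mul_one_sub_eq_one {x : 𝔸}
    (hx : ∀ t ∈ Icc (0 : ℝ) 1, IsUnit (1 - t • x)) :
    ∃ y, (∀ a, Commute a x → Commute a y) ∧ (1 + x * y) ^ 2 * (1 - x) = 1 := by
  obtain ⟨b, hb, hexp⟩ := exists_exp_mul_mul_one_sub_eq_one hx
  obtain ⟨z, hz, hexpz⟩ := exists_exp_eq_one_add_mul ((1 / 2 : ℝ) • (x * b))
  refine ⟨(1 / 2 : ℝ) • (b * z), fun a ha ↦ ?_, ?_⟩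
  · exact ((hb a ha).mul_right (hz a ((ha.mul_right (hb a ha)).smul_right _))).smul_right _
  · let _ : NormedAlgebra ℚ 𝔸 := .restrictScalars ℚ ℝ 𝔸
    have : x * (1 / 2 : ℝ) • (b * z) = (1 / 2 : ℝ) • (x * b) * z := by
      rw [mul_smul_comm, smul_mul_assoc, mul_assoc]
    rw [this, ← hexpz, sq, ← exp_add_of_commute (Commute.refl _), ← add_smul, add_halves, one_smul,
      hexp]

end SquareRoot

section IdempotentLifting

open Polynomial Filter Topology

lemma strictMono_ker_aeval_prod_range {R M : Type*} [CommRing R] [AddCommGroup M] [Module R M]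
    (f : Module.End R M) {q : ℕ → R[X]} (hq : Pairwise (Function.onFun IsCoprime q))
    (hker : ∀ n, LinearMap.ker (aeval f (q n)) ≠ ⊥) :
    StrictMono fun n ↦ LinearMap.ker (aeval f (∏ i ∈ Finset.range n, q i)) := by
  refine strictMono_nat_of_lt_succ fun n ↦ ?_
  have hcop : IsCoprime (∏ i ∈ Finset.range n, q i) (q n) :=
    IsCoprime.prod_left fun i hi ↦ hq (Finset.mem_range.1 hi).ne
  rw [Finset.prod_range_succ, ← sup_ker_aeval_eq_ker_aeval_mul_of_coprime f hcop, left_lt_sup]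
  exact fun hle ↦ hker n ((disjoint_ker_aeval_of_isCoprime f hcop).eq_bot_of_ge hle)

lemma not_strictMono_of_sub_mem {X : Type*} [NormedAddCommGroup X] [NormedSpace ℝ X]
    {M : ℕ → Submodule ℝ X} (hM : ∀ n, IsClosed (M n : Set X)) {L : ℕ → X → X}
    {S : Set X} (hS : IsCompact S) (hLS : ∀ n x, ‖x‖ ≤ 1 → L n x ∈ S)
    (hLM : ∀ n, ∀ x ∈ M (n + 1), x - L n x ∈ M n) : ¬StrictMono M := by
  intro hmono
  have hriesz (n : ℕ) : ∃ x ∈ M (n + 1), ‖x‖ ≤ 1 ∧ ∀ y ∈ M n, 1 / 2 ≤ ‖x - y‖ := by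
    obtain ⟨x₀, hx₀, hx₀'⟩ := SetLike.exists_of_lt (hmono n.lt_succ_self)
    have hclosed : IsClosed ((M n).comap (M (n + 1)).subtype : Set (M (n + 1))) :=
      (hM n).preimage continuous_subtype_val
    obtain ⟨x, -, hx, hxdist⟩ := riesz_lemma_of_lt_one hclosed ⟨⟨x₀, hx₀⟩, hx₀'⟩ one_half_lt_one
    exact ⟨x, x.2, hx.le, fun y hy ↦ hxdist ⟨y, hmono.monotone n.le_succ hy⟩ hy⟩
  choose x hxM hx1 hxdist using hriesz
  have hsep {m n : ℕ} (hmn : m < n) : 1 / 2 ≤ dist (L n (x n)) (L m (x m)) := by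
    have hm : L m (x m) ∈ M n := by
      refine hmono.monotone (Nat.succ_le_of_lt hmn) ?_
      have := hmono.monotone m.le_succ (hLM m _ (hxM m))
      simpa using sub_mem (hxM m) this
    convert hxdist n _ (add_mem (hLM n _ (hxM n)) hm) using 1
    rw [dist_eq_norm]
    congr 1
    abel
  obtain ⟨a, -, φ, hφ, hlim⟩ := hS.tendsto_subseq (x := fun n ↦ L n (x n))
    fun n ↦ hLS n (x n) (hx1 n)
  obtain ⟨N, hN⟩ := Metric.cauchySeq_iff'.1 hlim.cauchySeq (1 / 2) one_half_pos
  exact (hN (N + 1) N.le_succ).not_ge (hsep (hφ N.lt_succ_self))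

/-- The real polynomial whose value at an operator `W` is `V ^ 2 + s`, where
`V = W + c (1 - W ^ 2)` is a perturbation of `W`. -/
def perturbedSq (c s : ℝ) : ℝ[X] := (X + C c * (1 - X ^ 2)) ^ 2 + C s

lemma isCoprime_perturbedSq {c d s r : ℝ} (hcd : c ≠ d) (hs : 0 ≤ s) (hr : 0 ≤ r) :
    IsCoprime (perturbedSq c s) (perturbedSq d r) := by
  rw [isCoprime_iff_aeval_ne_zero_of_isAlgClosed ℝ ℂ]
  by_contra! h
  obtain ⟨w, hc, hd⟩ := h
  have re_eq_zero {z : ℂ} {t : ℝ} (ht : 0 ≤ t) (hz : z ^ 2 + t = 0) : z.re = 0 := by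
    have hre : z.re * z.re - z.im * z.im + t = 0 := by simpa [sq] using congrArg Complex.re hz
    have him : z.re * z.im + z.im * z.re = 0 := by simpa [sq] using congrArg Complex.im hz
    have : z.re ^ 2 * (z.re ^ 2 + t) = 0 := by
      linear_combination z.re ^ 2 * hre + z.re * z.im / 2 * him
    rcases mul_eq_zero.1 this with h | h
    · exact pow_eq_zero_iff two_ne_zero |>.1 h
    · exact pow_eq_zero_iff two_ne_zero |>.1 (by nlinarith [sq_nonneg z.re])
  have hc' : (w + c * (1 - w ^ 2)).re = 0 := re_eq_zero hs (by simpa [perturbedSq] using hc)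
  have hd' : (w + d * (1 - w ^ 2)).re = 0 := re_eq_zero hr (by simpa [perturbedSq] using hd)
  simp only [Complex.add_re, Complex.re_ofReal_mul] at hc' hd'
  have hw2 : (1 - w ^ 2).re = 0 := by
    refine (mul_eq_zero.1 ?_).resolve_left (sub_ne_zero.2 hcd)
    linear_combination hc' - hd'
  have hw : w.re = 0 := by simpa [hw2] using hc'
  have : 1 + w.im ^ 2 = 0 := by simpa [sq, hw] using hw2
  exact absurd this (by positivity)

variable {E : Type*} [NormedAddCommGroup E] [NormedSpace ℝ E]

lemma coe_aeval (T : E →L[ℝ] E) (q : ℝ[X]) :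
    ((aeval T q : E →L[ℝ] E) : Module.End ℝ E) = aeval (T : Module.End ℝ E) q :=
  (aeval_algHom_apply (AlgHom.mk' ContinuousLinearMap.toLinearMapRingHom fun _ _ ↦ rfl) T q).symm

lemma exists_smul_aeval_perturbedSq_eq_one_sub_mul (W : E →L[ℝ] E) {c s : ℝ}
    (hc : c ∈ Set.Icc 0 1) (hs : 0 ≤ s) :
    ∃ B : E →L[ℝ] E, ‖B‖ ≤ 1 + 2 * ‖W‖ + ‖1 - W ^ 2‖ ∧
      (1 + s)⁻¹ • aeval W (perturbedSq c s) = 1 - (1 - W ^ 2) * B := by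
  have hpoly : perturbedSq c s =
      (1 + s) • 1 - (1 - X ^ 2) * (1 - (2 * c) • X - c ^ 2 • (1 - X ^ 2)) := by
    simp only [perturbedSq, smul_eq_C_mul, C_add, C_mul, C_pow, C_1, C_ofNat]
    ring
  let D : E →L[ℝ] E := 1 - (2 * c) • W - c ^ 2 • (1 - W ^ 2)
  refine ⟨(1 + s)⁻¹ • D, ?_, ?_⟩
  · have hs1 : ‖(1 + s)⁻¹‖ ≤ 1 := by
      rw [norm_inv, Real.norm_of_nonneg (by positivity)]
      exact inv_le_one_of_one_le₀ (by linarith)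
    have hc2 : ‖c ^ 2‖ ≤ 1 := by
      rw [Real.norm_of_nonneg (sq_nonneg c)]
      exact pow_le_one₀ hc.1 hc.2
    have h2c : ‖2 * c‖ ≤ 2 := by
      rw [Real.norm_of_nonneg (by linarith [hc.1])]
      linarith [hc.2]
    calc ‖(1 + s)⁻¹ • D‖ ≤ 1 * ‖D‖ := by rw [norm_smul]; gcongr
      _ ≤ ‖(1 : E →L[ℝ] E)‖ + ‖(2 * c) • W‖ + ‖c ^ 2 • (1 - W ^ 2)‖ := by
        rw [one_mul]
        exact (norm_sub_le _ _).trans (by gcongr; exact norm_sub_le _ _)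
      _ ≤ 1 + 2 * ‖W‖ + 1 * ‖1 - W ^ 2‖ := by
        rw [norm_smul, norm_smul]
        gcongr
        exact ContinuousLinearMap.norm_id_le
      _ = 1 + 2 * ‖W‖ + ‖1 - W ^ 2‖ := by rw [one_mul]
  · have hs0 : 1 + s ≠ 0 := by positivity
    simp only [hpoly, map_sub, map_mul, map_smul, map_one, map_pow, aeval_X]
    rw [smul_sub, inv_smul_smul₀ hs0, mul_smul_comm]

lemma exists_forall_ker_aeval_perturbedSq_eq_bot {W : E →L[ℝ] E}
    (hW : IsCompactOperator (1 - W ^ 2 : E →L[ℝ] E)) :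
    ∃ c ∈ Set.Icc (0 : ℝ) 1, ∀ s : ℝ, 0 ≤ s →
      LinearMap.ker (aeval (W : Module.End ℝ E) (perturbedSq c s)) = ⊥ := by
  by_contra! hcon
  have hmem (n : ℕ) : ((n : ℝ) + 1)⁻¹ ∈ Set.Icc (0 : ℝ) 1 :=
    ⟨by positivity, inv_le_one_of_one_le₀ (by simp)⟩
  choose s hs hker using fun n ↦ hcon _ (hmem n)
  choose B hBnorm hB using fun n ↦ exists_smul_aeval_perturbedSq_eq_one_sub_mul W (hmem n) (hs n)
  obtain ⟨S, hS, hWS⟩ := hW.image_closedBall_subset_compact (𝕜₁ := ℝ)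
    (f := ((1 - W ^ 2 : E →L[ℝ] E) : E →ₗ[ℝ] E)) (1 + 2 * ‖W‖ + ‖1 - W ^ 2‖)
  -- Infinitely many pairwise coprime polynomials in `W` with nonzero kernel give a strictly
  -- increasing chain of subspaces, which Riesz's lemma excludes as for compact operators.
  have hcop : Pairwise (Function.onFun IsCoprime
      fun n : ℕ ↦ perturbedSq ((n : ℝ) + 1)⁻¹ (s n)) := fun m n hmn ↦
    isCoprime_perturbedSq (by simpa using hmn) (hs m) (hs n)
  refine not_strictMono_of_sub_mem (fun n ↦ ?_) (L := fun n ↦ ((1 - W ^ 2) * B n : E →L[ℝ] E)) hS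
    (fun n x hx ↦ hWS ⟨B n x, ?_, rfl⟩) (fun n x hx ↦ ?_)
    (strictMono_ker_aeval_prod_range (W : Module.End ℝ E) hcop hker)
  · rw [← coe_aeval]
    exact ContinuousLinearMap.isClosed_ker _
  · simpa using (B n).le_of_opNorm_le_of_le (hBnorm n) hx
  · have hLx : x - ((1 - W ^ 2) * B n : E →L[ℝ] E) x =
        (1 + s n)⁻¹ • aeval (W : Module.End ℝ E) (perturbedSq ((n : ℝ) + 1)⁻¹ (s n)) x := by
      rw [← coe_aeval]
      exact (DFunLike.congr_fun (hB n) x).symm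
    rw [hLx]
    refine Submodule.smul_mem _ _ ?_
    rwa [LinearMap.mem_ker, ← Module.End.mul_apply, ← map_mul, ← Finset.prod_range_succ]

lemma isUnit_aeval_perturbedSq [CompleteSpace E] {W : E →L[ℝ] E}
    (hW : IsCompactOperator (1 - W ^ 2 : E →L[ℝ] E)) {c s : ℝ} (hc : c ∈ Set.Icc 0 1)
    (hs : 0 ≤ s) (hker : LinearMap.ker (aeval (W : Module.End ℝ E) (perturbedSq c s)) = ⊥) :
    IsUnit (aeval W (perturbedSq c s)) := by
  obtain ⟨B, -, hB⟩ := exists_smul_aeval_perturbedSq_eq_one_sub_mul W hc hs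
  have hs0 : (1 + s)⁻¹ ≠ 0 := by positivity
  have hcompact : IsCompactOperator ((1 - W ^ 2) * B : E →L[ℝ] E) := hW.comp_clm B
  rw [← isUnit_smul_iff (Units.mk0 _ hs0), Units.smul_mk0, hB]
  refine (hcompact.hasEigenvalue_or_mem_resolventSet one_ne_zero).elim (fun h ↦ ?_)
    fun h ↦ by simpa [spectrum.mem_resolventSet_iff] using h
  obtain ⟨x, hx⟩ := h.exists_hasEigenvector
  refine absurd ((Submodule.eq_bot_iff _).1 hker x ?_) hx.2
  have hfix : ((1 - W ^ 2) * B : E →L[ℝ] E) x = x := by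
    simpa only [one_smul] using! hx.apply_eq_smul
  have hzero : (1 + s)⁻¹ • aeval W (perturbedSq c s) x = 0 :=
    (DFunLike.congr_fun hB x).trans (sub_eq_zero.2 hfix.symm)
  rw [LinearMap.mem_ker, ← coe_aeval]
  exact (smul_eq_zero_iff_right hs0).1 hzero

theorem exists_sq_eq_one_isCompactOperator_sub [CompleteSpace E] {W : E →L[ℝ] E}
    (hW : IsCompactOperator (1 - W ^ 2 : E →L[ℝ] E)) :
    ∃ J : E →L[ℝ] E, J ^ 2 = 1 ∧ IsCompactOperator (J - W : E →L[ℝ] E) := by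
  obtain ⟨c, hc, hker⟩ := exists_forall_ker_aeval_perturbedSq_eq_bot hW
  let V : E →L[ℝ] E := W + c • (1 - W ^ 2)
  have haeval (s : ℝ) : aeval W (perturbedSq c s) = V ^ 2 + s • 1 := by
    simp [perturbedSq, V, Algebra.algebraMap_eq_smul_one]
  have hunit (t : ℝ) (ht : t ∈ Set.Icc 0 1) : IsUnit (1 - t • (1 - V ^ 2)) := by
    rcases ht.1.eq_or_lt with rfl | ht0
    · simp
    have hs : 0 ≤ (1 - t) / t := div_nonneg (sub_nonneg.2 ht.2) ht0.le
    have hu := isUnit_aeval_perturbedSq hW hc hs (hker _ hs)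
    rw [haeval, ← isUnit_smul_iff (Units.mk0 t ht0.ne'), Units.smul_mk0, smul_add, smul_smul,
      mul_div_cancel₀ _ ht0.ne'] at hu
    convert hu using 1
    module
  obtain ⟨y, hy, hinv⟩ := exists_one_add_mul_sq_mul_one_sub_eq_one hunit
  have hVcomm : Commute V (1 - V ^ 2) := (Commute.one_right V).sub_right (Commute.self_pow V 2)
  have hcompact : IsCompactOperator (1 - V ^ 2 : E →L[ℝ] E) := by
    obtain ⟨B, -, hB⟩ := exists_smul_aeval_perturbedSq_eq_one_sub_mul W hc le_rfl
    rw [haeval] at hB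
    have hV : V ^ 2 = 1 - (1 - W ^ 2) * B := by simpa using hB
    rw [hV, sub_sub_cancel]
    exact hW.comp_clm B
  refine ⟨V * (1 + (1 - V ^ 2) * y), ?_, ?_⟩
  · have hcomm : Commute V (1 + (1 - V ^ 2) * y) :=
      (Commute.one_right V).add_right (hVcomm.mul_right (hy V hVcomm))
    rw [hcomm.mul_pow, (hcomm.pow_pow 2 2).eq]
    simpa using hinv
  · have hJW : V * (1 + (1 - V ^ 2) * y) - W = c • (1 - W ^ 2) + V * ((1 - V ^ 2) * y) := by
      simp only [mul_add, mul_one, V]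
      abel
    rw [hJW]
    exact (hW.smul c).add ((hcompact.comp_clm y).clm_comp V)

theorem exists_isIdempotentElem_isCompactOperator_sub [CompleteSpace E] {A : E →L[ℝ] E}
    (hA : IsCompactOperator (A - A ^ 2 : E →L[ℝ] E)) :
    ∃ P : E →L[ℝ] E, IsIdempotentElem P ∧ IsCompactOperator (P - A : E →L[ℝ] E) := by
  have hW : 1 - ((2 : ℝ) • A - 1) ^ 2 = (4 : ℝ) • (A - A ^ 2) := by
    simp only [sq, sub_mul, mul_sub, smul_mul_smul_comm, mul_one, one_mul]
    module
  obtain ⟨J, hJ, hJA⟩ := exists_sq_eq_one_isCompactOperator_sub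
    (W := (2 : ℝ) • A - 1) (by rw [hW]; exact hA.smul (4 : ℝ))
  refine ⟨(1 / 2 : ℝ) • (1 + J), ?_, ?_⟩
  · have hJJ : J * J = 1 := by rw [← sq, hJ]
    have : (1 + J) * (1 + J) = (2 : ℝ) • (1 + J) := by
      simp only [mul_add, add_mul, mul_one, one_mul, hJJ]
      module
    rw [IsIdempotentElem, smul_mul_smul_comm, this, smul_smul]
    norm_num
  · have hP : (1 / 2 : ℝ) • (1 + J) - A = (1 / 2 : ℝ) • (J - ((2 : ℝ) • A - 1)) := by module
    rw [hP]
    exact hJA.smul (1 / 2 : ℝ)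

end IdempotentLifting

section Projection

open Filter Topology

section Homogeneity

variable {E F G : Type*} [NormedAddCommGroup E] [NormedSpace ℝ E] [NormedAddCommGroup F]
variable [NormedSpace ℝ F] [NormedAddCommGroup G] [NormedSpace ℝ G]

/-- The filter of neighbourhoods of `0` in the unit ball for the seminorm `‖j ·‖`: convergence
along it is convergence along the `j`-small vectors of the unit ball. -/
def unitBallComap (j : E →L[ℝ] G) : Filter E := comap j (𝓝 0) ⊓ 𝓟 (Metric.closedBall 0 1)

lemma exists_forall_norm_lt_of_tendsto_unitBallComap {j : E →L[ℝ] G} {R : E →L[ℝ] F}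
    (hR : Tendsto R (unitBallComap j) (𝓝 0)) {ε : ℝ} (hε : 0 < ε) :
    ∃ α > 0, ∀ x, ‖j x‖ < α * ‖x‖ → ‖R x‖ < ε * ‖x‖ := by
  obtain ⟨α, hα, hball⟩ := (((Metric.nhds_basis_ball.comap j).inf_principal _).tendsto_iff
    Metric.nhds_basis_ball).1 hR ε hε
  refine ⟨α, hα, fun x hx ↦ ?_⟩
  have hx0 : 0 < ‖x‖ := pos_of_mul_pos_right ((norm_nonneg _).trans_lt hx) hα.le
  have hsmall := hball (‖x‖⁻¹ • x) ⟨?_, ?_⟩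
  · rwa [mem_ball_zero_iff, map_smul, norm_smul, norm_inv, norm_norm,
      inv_mul_lt_iff₀' hx0] at hsmall
  · rwa [Set.mem_preimage, mem_ball_zero_iff, map_smul, norm_smul, norm_inv, norm_norm,
      inv_mul_lt_iff₀' hx0]
  · simp [norm_smul, hx0.ne']

lemma unitBallComap_le_nhds_zero [CompleteSpace E] {i : E →L[ℝ] F} {j : E →L[ℝ] G}
    (hij : ∀ x, ‖x‖ = max ‖i x‖ ‖j x‖) (hi : Function.Injective i) (hj : IsCompactOperator j) :
    unitBallComap i ≤ 𝓝 0 := by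
  obtain ⟨S, hS, hjS⟩ := hj.image_closedBall_subset_compact (𝕜₁ := ℝ) (f := (j : E →ₗ[ℝ] G)) 1
  have hisom : Isometry (i.prod j) := AddMonoidHomClass.isometry_of_norm _ fun x ↦ (hij x).symm
  refine le_iff_ultrafilter.2 fun u hu ↦ ?_
  have huball : ∀ᶠ x in u, x ∈ Metric.closedBall (0 : E) 1 :=
    le_principal_iff.1 (hu.trans inf_le_right)
  have hui : Tendsto i u (𝓝 0) := tendsto_iff_comap.2 (hu.trans inf_le_left)
  obtain ⟨z, -, huj⟩ := hS.ultrafilter_le_nhds' (u.map j) <|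
    huball.mono fun x hx ↦ hjS ⟨x, hx, rfl⟩
  have hcauchy : Cauchy (u : Filter E) :=
    hisom.isUniformInducing.cauchy_map_iff.1 (hui.prodMk_nhds huj).cauchy_map
  obtain ⟨x, hx⟩ := CompleteSpace.complete hcauchy
  have hix : i x = 0 := tendsto_nhds_unique (i.continuous.continuousAt.mono_left hx) hui
  have hx0 : x = 0 := hi (hix.trans (map_zero i).symm)
  exact hx0 ▸ hx

lemma exists_forall_norm_le_mul_norm [CompleteSpace E] {i : E →L[ℝ] F} {j : E →L[ℝ] G}
    (hij : ∀ x, ‖x‖ = max ‖i x‖ ‖j x‖) (hi : Function.Injective i) (hj : IsCompactOperator j) :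
    ∃ C > 0, ∀ x, ‖x‖ ≤ C * ‖i x‖ := by
  obtain ⟨α, hα, h⟩ := exists_forall_norm_lt_of_tendsto_unitBallComap
    (R := .id ℝ E) (unitBallComap_le_nhds_zero hij hi hj) one_pos
  refine ⟨α⁻¹, inv_pos.2 hα, fun x ↦ ?_⟩
  rw [le_inv_mul_iff₀ hα]
  by_contra! hlt
  exact (one_mul ‖x‖).not_gt (h x hlt)

lemma exists_forall_mem_range_norm_le_mul_norm [CompleteSpace E] {i : E →L[ℝ] F} {j : E →L[ℝ] G}
    (hij : ∀ x, ‖x‖ = max ‖i x‖ ‖j x‖) (hi : Function.Injective i) {P : E →L[ℝ] E}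
    (hP : IsIdempotentElem P) (hjP : IsCompactOperator (j ∘L P)) :
    ∃ C > 0, ∀ y ∈ P.range, ‖y‖ ≤ C * ‖i y‖ := by
  have hclosed : IsClosed (P.range : Set E) :=
    ContinuousLinearMap.IsIdempotentElem.isClosed_range hP
  have hcomplete : CompleteSpace P.range := hclosed.completeSpace_coe
  have hjY : j ∘L P.range.subtypeL = (j ∘L P) ∘L P.range.subtypeL := by
    ext ⟨_, x, rfl⟩
    exact congrArg j (DFunLike.congr_fun hP x).symm
  have hcompact : IsCompactOperator (j ∘L P.range.subtypeL) := by
    rw [hjY]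
    exact hjP.comp_clm P.range.subtypeL
  obtain ⟨C, hC, h⟩ := exists_forall_norm_le_mul_norm (i := i ∘L P.range.subtypeL)
    (j := j ∘L P.range.subtypeL) (fun y ↦ hij y) (hi.comp Subtype.val_injective) hcompact
  exact ⟨C, hC, fun y hy ↦ h ⟨y, hy⟩⟩

end Homogeneity

variable {α : Type*} {F : α → Type*} [∀ a, NormedAddCommGroup (F a)] [∀ a, NormedSpace ℝ (F a)]
variable {q : ℝ≥0∞} [Fact (1 ≤ q)] {E G H : Type*} [NormedAddCommGroup E] [NormedSpace ℝ E]
variable [NormedAddCommGroup G] [NormedSpace ℝ G]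
variable [NormedAddCommGroup H] [InnerProductSpace ℝ H]

lemma hasUpperEstimate_unitBallComap (hq : q ≠ ⊤) {i : E →L[ℝ] lp F q} {j : E →L[ℝ] G}
    (hij : ∀ x, ‖x‖ = max ‖i x‖ ‖j x‖)
    (hcoord : ∀ a, Tendsto (fun x ↦ i x a) (comap j (𝓝 0)) (𝓝 0)) :
    HasUpperEstimate q.toReal 1 (unitBallComap j) (id : E → E) := by
  have hi : ∀ᶠ x in unitBallComap j, ‖i x‖ ≤ 1 :=
    mem_inf_of_right fun x hx ↦ (le_max_left _ _).trans <|
      (hij x).symm.trans_le (mem_closedBall_zero_iff.1 hx)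
  have hest := hasUpperEstimate_lp hq hi fun a ↦ (hcoord a).mono_left inf_le_left
  rw [Real.one_rpow] at hest
  exact hest.of_norm_eq_max hij zero_le_one ENNReal.toReal_nonneg
    (tendsto_comap.mono_left inf_le_left)

lemma tendsto_one_sub_unitBallComap (hq : q ≠ ⊤) (hq2 : 2 < q.toReal) {i : E →L[ℝ] lp F q}
    {j : E →L[ℝ] G} (hij : ∀ x, ‖x‖ = max ‖i x‖ ‖j x‖)
    (hcoord : ∀ a, Tendsto (fun x ↦ i x a) (comap j (𝓝 0)) (𝓝 0)) {A P : E →L[ℝ] E}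
    {T : E →L[ℝ] H} {Q : H →L[ℝ] E} (hQT : A + Q ∘L T = 1)
    (hPA : IsCompactOperator (P - A : E →L[ℝ] E)) :
    Tendsto (1 - P : E →L[ℝ] E) (unitBallComap j) (𝓝 0) := by
  have hest := hasUpperEstimate_unitBallComap hq hij hcoord
  have hT := (Q.continuous.tendsto 0).comp (hest.tendsto_map_zero zero_le_one hq2 T)
  have hK := hest.tendsto_map_zero_of_isCompactOperator zero_le_one hq2
    (mem_inf_of_right fun x hx ↦ mem_closedBall_zero_iff.1 hx) hPA
  have hsub : 1 - P = Q ∘L T - (P - A) := by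
    rw [← hQT]
    abel
  rw [hsub]
  simpa using! hT.sub hK

variable [∀ a, ProperSpace (F a)]

lemma isCompactOperator_sub_sq_of_add_eq_one (hq : q ≠ ⊤) (hq2 : 2 < q.toReal)
    {T₁ : E →L[ℝ] lp F q} {Q₁ : lp F q →L[ℝ] E} {T₂ : E →L[ℝ] H} {Q₂ : H →L[ℝ] E}
    (hQT : Q₁ ∘L T₁ + Q₂ ∘L T₂ = 1) :
    IsCompactOperator (Q₁ ∘L T₁ - (Q₁ ∘L T₁) ^ 2 : E →L[ℝ] E) := by
  have hfactor : Q₁ ∘L T₁ - (Q₁ ∘L T₁) ^ 2 = Q₂ ∘L (T₂ ∘L Q₁) ∘L T₁ := by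
    rw [sq, ← one_sub_mul, ← hQT, add_sub_cancel_left]
    rfl
  rw [hfactor]
  exact ((isCompactOperator_of_two_lt hq hq2 (T₂ ∘L Q₁)).comp_clm T₁).clm_comp Q₂

theorem exists_isIdempotentElem_of_add_eq_one [CompleteSpace E] {G : Type*} [NormedAddCommGroup G]
    [InnerProductSpace ℝ G] (hq : q ≠ ⊤) (hq2 : 2 < q.toReal) {i : E →L[ℝ] lp F q} {j : E →L[ℝ] G}
    (hij : ∀ x, ‖x‖ = max ‖i x‖ ‖j x‖)
    (hi : Function.Injective i) (hcoord : ∀ a, Tendsto (fun x ↦ i x a) (comap j (𝓝 0)) (𝓝 0))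
    {T₁ : E →L[ℝ] lp F q} {Q₁ : lp F q →L[ℝ] E} {T₂ : E →L[ℝ] H} {Q₂ : H →L[ℝ] E}
    (hQT : Q₁ ∘L T₁ + Q₂ ∘L T₂ = 1) :
    ∃ P : E →L[ℝ] E, IsIdempotentElem P ∧ (∃ C > 0, ∀ y ∈ P.range, ‖y‖ ≤ C * ‖i y‖) ∧
      ∀ ε > 0, ∃ α > 0, ∀ x, ‖j x‖ < α * ‖x‖ → ‖x - P x‖ < ε * ‖x‖ := by
  obtain ⟨P, hP, hPA⟩ := exists_isIdempotentElem_isCompactOperator_sub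
    (isCompactOperator_sub_sq_of_add_eq_one hq hq2 hQT)
  have hjP : IsCompactOperator (j ∘L P) := by
    have hsum : j ∘L P = (j ∘L Q₁) ∘L T₁ + j ∘L (P - Q₁ ∘L T₁) := by
      rw [ContinuousLinearMap.comp_sub, ContinuousLinearMap.comp_assoc, add_sub_cancel]
    rw [hsum]
    exact ((isCompactOperator_of_two_lt hq hq2 (j ∘L Q₁)).comp_clm T₁).add (hPA.clm_comp j)
  exact ⟨P, hP, exists_forall_mem_range_norm_le_mul_norm hij hi hP hjP, fun ε hε ↦
    exists_forall_norm_lt_of_tendsto_unitBallComap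
      (tendsto_one_sub_unitBallComap hq hq2 hij hcoord hQT hPA) hε⟩

end Projection

namespace Xpw

open Filter Topology

variable [Fact (1 ≤ ENNReal.ofReal p)]

/-- The contraction from `X_{p,w}` to `ℓ_p` that sends `x` to its sequence of coordinates. -/
def toSeqP : Xpw p w →L[ℝ] SeqP p :=
  .fst ℝ (SeqP p) Seq2 ∘L (XpwMod p w).subtypeL

/-- The contraction from `X_{p,w}` to `ℓ_2` that sends `x` to `w · x`. -/
def toSeq2 : Xpw p w →L[ℝ] Seq2 :=
  .snd ℝ (SeqP p) Seq2 ∘L (XpwMod p w).subtypeL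

lemma norm_eq_max (x : Xpw p w) : ‖x‖ = max ‖toSeqP x‖ ‖toSeq2 x‖ := rfl

lemma ratio_eq_div (x : Xpw p w) : ratio x = ‖toSeq2 x‖ / ‖toSeqP x‖ := rfl

lemma toSeq2_apply (x : Xpw p w) (n : ℕ) : toSeq2 x n = w n * toSeqP x n :=
  (show XpwMod p w from x).2 n

lemma toSeqP_injective : Function.Injective (toSeqP : Xpw p w →L[ℝ] SeqP p) := by
  refine (injective_iff_map_eq_zero _).2 fun x hx ↦ ?_
  have hx2 : toSeq2 x = 0 := by
    ext n
    simp [toSeq2_apply, hx]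
  rw [← norm_eq_zero, norm_eq_max, hx, hx2, norm_zero, norm_zero, max_self]

lemma tendsto_toSeqP_apply {n : ℕ} (hw : w n ≠ 0) :
    Tendsto (fun x : Xpw p w ↦ toSeqP x n) (comap toSeq2 (𝓝 0)) (𝓝 0) := by
  have h2 : Tendsto (fun x : Xpw p w ↦ toSeq2 x n) (comap toSeq2 (𝓝 0)) (𝓝 0) :=
    ((lp.evalCLM ℝ (fun _ : ℕ ↦ ℝ) 2 n).continuous.tendsto 0).comp tendsto_comap
  simpa [toSeq2_apply, hw] using h2.const_mul (w n)⁻¹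

end Xpw

lemma exists_comp_add_comp_eq_one {E F G : Type*} [NormedAddCommGroup E] [NormedSpace ℝ E]
    [NormedAddCommGroup F] [NormedSpace ℝ F] [NormedAddCommGroup G] [NormedSpace ℝ G]
    {V : Submodule ℝ (F × G)} (hV : V.ClosedComplemented) (e : E ≃L[ℝ] V) :
    ∃ (T₁ : E →L[ℝ] F) (Q₁ : F →L[ℝ] E) (T₂ : E →L[ℝ] G) (Q₂ : G →L[ℝ] E),
      Q₁ ∘L T₁ + Q₂ ∘L T₂ = 1 := by
  obtain ⟨π, hπ⟩ := hV
  let T : E →L[ℝ] F × G := V.subtypeL ∘L (e : E →L[ℝ] V)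
  let Q : F × G →L[ℝ] E := (e.symm : V →L[ℝ] E) ∘L π
  refine ⟨.fst ℝ F G ∘L T, Q ∘L .inl ℝ F G, .snd ℝ F G ∘L T, Q ∘L .inr ℝ F G, ?_⟩
  ext x
  have hsum : ((T x).1, (0 : G)) + (0, (T x).2) = T x := by simp
  calc Q ((T x).1, 0) + Q (0, (T x).2) = Q (T x) := by rw [← map_add, hsum]
    _ = x := by simp [Q, T, hπ]

open Filter Topology in
theorem stmt17_general (p : ℝ) (hp : 2 < p) [Fact (1 ≤ ENNReal.ofReal p)]
    (w : ℕ → ℝ) (hw : ∀ n, w n ≠ 0) (X : Submodule ℝ (Xpw p w))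
    (V : Submodule ℝ (SeqP p × Seq2)) (hV : V.ClosedComplemented)
    (hiso : Nonempty (↥X ≃L[ℝ] ↥V)) :
    ∃ P : ↥X →L[ℝ] ↥X, (∀ x : ↥X, P (P x) = P x) ∧
      ∃ ε α α' : ℝ, 0 < ε ∧ 0 < α ∧ 0 < α' ∧
        ε * ‖ContinuousLinearMap.id ℝ ↥X - P‖ ≤ 1 ∧
        (∀ y : ↥X, y ∈ LinearMap.range (P : ↥X →ₗ[ℝ] ↥X) → y ≠ 0 → ratio (y : Xpw p w) ≤ α') ∧
        (∀ x : ↥X, x ≠ 0 → ratio (x : Xpw p w) < α →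
          ∃ y ∈ LinearMap.range (P : ↥X →ₗ[ℝ] ↥X), ‖x - y‖ < ε * ‖x‖) := by
  obtain ⟨e⟩ := hiso
  have hVcomplete : CompleteSpace V := hV.isClosed.completeSpace_coe
  have hXcomplete : CompleteSpace X :=
    (completeSpace_congr (e := e.toEquiv) e.isUniformEmbedding).2 hVcomplete
  obtain ⟨T₁, Q₁, T₂, Q₂, hQT⟩ := exists_comp_add_comp_eq_one hV e
  have hcoord (n : ℕ) : Tendsto (fun x : X ↦ Xpw.toSeqP (x : Xpw p w) n)
      (comap (Xpw.toSeq2 ∘L X.subtypeL) (𝓝 0)) (𝓝 0) :=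
    (Xpw.tendsto_toSeqP_apply (hw n)).comp (tendsto_comap_iff.2 tendsto_comap)
  obtain ⟨P, hP, ⟨C, hC, hYC⟩, hsmall⟩ := exists_isIdempotentElem_of_add_eq_one
    ENNReal.ofReal_ne_top (by rwa [ENNReal.toReal_ofReal (by linarith)])
    (i := Xpw.toSeqP ∘L X.subtypeL) (j := Xpw.toSeq2 ∘L X.subtypeL)
    (fun x ↦ Xpw.norm_eq_max (x : Xpw p w))
    (Xpw.toSeqP_injective.comp Subtype.val_injective) hcoord hQT
  have hε : 0 < (‖ContinuousLinearMap.id ℝ X - P‖ + 1)⁻¹ := by positivity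
  obtain ⟨α, hα, hαP⟩ := hsmall _ hε
  refine ⟨P, DFunLike.congr_fun hP, _, α, C, hε, hα, hC, ?_, fun y hy _ ↦ ?_, fun x hx hr ↦ ?_⟩
  · rw [inv_mul_le_iff₀ (by positivity)]
    linarith
  · rw [Xpw.ratio_eq_div]
    exact div_le_of_le_mul₀ (norm_nonneg _) hC.le ((le_max_right _ _).trans (hYC y hy))
  · have hx0 : 0 < ‖Xpw.toSeqP (x : Xpw p w)‖ :=
      norm_pos_iff.2 ((map_ne_zero_iff _ Xpw.toSeqP_injective).2 (by simpa using hx))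
    rw [Xpw.ratio_eq_div, div_lt_iff₀ hx0] at hr
    exact ⟨P x, ⟨x, rfl⟩, hαP x (hr.trans_le (by gcongr; exact le_max_left _ _))⟩

/-- Proposition 2.6, converse: if a complemented subspace `X` of `X_p`
is isomorphic to a complemented subspace of `ℓ_p ⊕ ℓ_2`, then there exist a bounded
projection `P` on `X` with range `Y` and constants `ε, α, α' > 0` with
`ε ≤ ‖I - P‖⁻¹` (stated multiplicatively as `ε ‖I - P‖ ≤ 1`) such that (a) `r(y) ≤ α'`
for all nonzero `y ∈ Y` and (b) every nonzero `x ∈ X` with `r(x) < α` admits `y ∈ Y`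
with `‖x - y‖ < ε ‖x‖`. -/
theorem stmt17 (p : ℝ) (hp : 2 < p) [Fact (1 ≤ ENNReal.ofReal p)]
    (w : ℕ → ℝ) (hw : IsXpWeight p w)
    (X : Submodule ℝ (Xpw p w)) (hX : X.ClosedComplemented)
    (V : Submodule ℝ (SeqP p × Seq2)) (hV : V.ClosedComplemented)
    (hiso : Nonempty (↥X ≃L[ℝ] ↥V)) :
    ∃ P : ↥X →L[ℝ] ↥X, (∀ x : ↥X, P (P x) = P x) ∧
      ∃ ε α α' : ℝ, 0 < ε ∧ 0 < α ∧ 0 < α' ∧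
        ε * ‖ContinuousLinearMap.id ℝ ↥X - P‖ ≤ 1 ∧
        (∀ y : ↥X, y ∈ LinearMap.range (P : ↥X →ₗ[ℝ] ↥X) → y ≠ 0 → ratio (y : Xpw p w) ≤ α') ∧
        (∀ x : ↥X, x ≠ 0 → ratio (x : Xpw p w) < α →
          ∃ y ∈ LinearMap.range (P : ↥X →ₗ[ℝ] ↥X), ‖x - y‖ < ε * ‖x‖) :=
  stmt17_general p hp w (fun n ↦ (hw.1 n).ne') X V hV hiso
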